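/- arXiv:math-ph/0512073 — 2 statements merged into one kernel-verified Lean document; each statement's English description precedes it below -/
import Mathlib

section
/- Suppose the hierarchical structure is homogeneous of degree n ≥ 2 (so N_r = n^r) and there exist constants C₁ > 0, C₂ > 0, ρ > 1 and r₀ such that C₁ ρ^{−r} ≤ p_r ≤ C₂ ρ^{−r} for all r ≥ r₀. Then lim_{t↓0} log μ([1−t, 1]) / log t = (log n)/(log ρ), i.e. the spectral dimension of the model equals d(n,ρ) = 2 (log n)/(log ρ). -/
/-!
Write `τ r = 1 - lam p r = ∑_{s > r} p s` for the distance from the atom `lam p r` to the top of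
the spectrum. Comparison with the geometric series gives `C₁ / ρ ^ (r + 1) ≤ τ r ≤ D / ρ ^ (r + 1)`
for large `r`, with `D = C₂ / (1 - 1 / ρ)` (`le_one_sub_lam`, `one_sub_lam_le`). For small `t > 0`
let `R` be the first rank with `τ R ≤ t`. The atoms in `[1 - t, 1]` are exactly those of rank at
least `R`, and their weights telescope to `1 / N_R = nn ^ (-R)` (`toReal_sum_dirac_Icc`). Since
`τ R ≤ t < τ (R - 1)`, the quantity `log t + R log ρ` stays bounded as `t ↓ 0`. Hence
`log μ([1 - t, 1]) = -R log nn` differs from `(log nn / log ρ) log t` by a bounded amount, and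
dividing by `log t → -∞` gives the limit (`tendsto_div_log`).
-/

open scoped ENNReal
open MeasureTheory Filter

noncomputable section

/-- A hierarchical structure `(X, 𝐏, 𝐧)`: `Q r x` is the unique cluster of rank `r`
containing `x` and `n r` is the branching number.  The axioms say: `n 0 = 1`, rank-0
clusters are singletons, each `Q r ·` is a partition (classes determined by membership),
clusters of rank `r` are unions of clusters of rank `r-1`, each rank-`(r+1)` cluster is a
disjoint union of exactly `n (r+1)` clusters of rank `r`, and any two points lie in a
common cluster of some rank. -/
structure IsHierarchical {X : Type*} (n : ℕ → ℕ) (Q : ℕ → X → Set X) : Prop where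
  n_pos : ∀ r, 0 < n r
  n_zero : n 0 = 1
  Q_zero : ∀ x, Q 0 x = {x}
  mem_self : ∀ r x, x ∈ Q r x
  eq_of_mem : ∀ r x y, y ∈ Q r x → Q r x = Q r y
  subset_succ : ∀ r x, Q r x ⊆ Q (r + 1) x
  exists_mem : ∀ x y, ∃ r, y ∈ Q r x
  finite : ∀ r x, (Q r x).Finite
  card_sub : ∀ r x, Nat.card ↥(Q r '' Q (r + 1) x) = n (r + 1)

/-- `N r = n 0 * n 1 * ⋯ * n r`, the size of a rank-`r` cluster. -/
def hN (n : ℕ → ℕ) (r : ℕ) : ℕ := ∏ s ∈ Finset.range (r + 1), n s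

/-- The hierarchical distance `d(x,y) = min {r | y ∈ Q r x}`. -/
def hdist {X : Type*} (Q : ℕ → X → Set X) (x y : X) : ℕ := sInf {r | y ∈ Q r x}

/-- `λ r = p 0 + p 1 + ⋯ + p r`. -/
def lam (p : ℕ → ℝ) (r : ℕ) : ℝ := ∑ s ∈ Finset.range (r + 1), p s

/-- The Hilbert space `ℓ²(X)` (complex). -/
abbrev ℓ2 (X : Type*) := lp (fun _ : X => ℂ) 2

lemma hN_eq_pow {n : ℕ → ℕ} {nn : ℕ} (h0 : n 0 = 1) (h : ∀ r, 1 ≤ r → n r = nn) (r : ℕ) :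
    hN n r = nn ^ r := by
  unfold hN
  rw [Finset.prod_range_succ', h0, mul_one,
    Finset.prod_congr rfl fun s _ => h (s + 1) (Nat.le_add_left 1 s)]
  simp

lemma hasSum_one_sub_lam {p : ℕ → ℝ} (hp0 : p 0 = 0) (hpsum : HasSum (fun r => p (r + 1)) 1)
    (r : ℕ) : HasSum (fun k => p (k + (r + 1))) (1 - lam p r) := by
  have h1 : HasSum p 1 := by
    have := (hasSum_nat_add_iff (f := p) 1).1 hpsum
    simpa [hp0] using this
  exact (hasSum_nat_add_iff' (f := p) (r + 1)).2 h1

lemma le_one_sub_lam {p : ℕ → ℝ} (hp0 : p 0 = 0) (hppos : ∀ r, 1 ≤ r → 0 < p r)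
    (hpsum : HasSum (fun r => p (r + 1)) 1) (r : ℕ) : p (r + 1) ≤ 1 - lam p r := by
  have := le_hasSum (hasSum_one_sub_lam hp0 hpsum r) 0 fun k _ => (hppos _ (by omega)).le
  simpa using this

lemma one_sub_lam_le {p : ℕ → ℝ} (hp0 : p 0 = 0) (hpsum : HasSum (fun r => p (r + 1)) 1)
    {C ρ : ℝ} (hρ : 1 < ρ) {r : ℕ} (hb : ∀ s, r ≤ s → p s ≤ C / ρ ^ s) :
    1 - lam p r ≤ C * (1 - ρ⁻¹)⁻¹ / ρ ^ (r + 1) := by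
  have hρ0 : 0 < ρ := by linarith
  have hg := (hasSum_geometric_of_lt_one (inv_nonneg.2 hρ0.le) (inv_lt_one_of_one_lt₀ hρ)).mul_left
    (C / ρ ^ (r + 1))
  refine (hasSum_le (fun k => ?_) (hasSum_one_sub_lam hp0 hpsum r) hg).trans_eq (by ring)
  refine (hb _ (by omega)).trans_eq ?_
  rw [pow_add, inv_pow]
  field_simp

/-- If `x` is increasing and bounded by `1`, `a` decreases to `0`, and `R` is the first index with
`1 - t ≤ x R`, then the masses `a r - a (r + 1)` placed at the points `x r` of
`[1 - t, 1]` telescope to `a R`. -/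
lemma toReal_sum_dirac_Icc {x a : ℕ → ℝ} (hx : Monotone x) (hx1 : ∀ r, x r ≤ 1)
    (ha : Antitone a) (ha0 : Tendsto a atTop (nhds 0)) {t : ℝ} {R : ℕ}
    (hR : 1 - t ≤ x R) (hR' : ∀ r < R, x r < 1 - t) :
    ((Measure.sum fun r : ℕ => ENNReal.ofReal (a r - a (r + 1)) • Measure.dirac (x r))
      (Set.Icc (1 - t) 1)).toReal = a R := by
  set f : ℕ → ℝ := fun r => if R ≤ r then a r - a (r + 1) else 0 with hf
  have hnn : ∀ r, 0 ≤ a r - a (r + 1) := fun r => sub_nonneg.2 (ha r.le_succ)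
  have hf0 : ∀ r, 0 ≤ f r := fun r => by
    simp only [hf]; split_ifs
    exacts [hnn r, le_rfl]
  have hsum : HasSum f (a R) := by
    rw [← Function.Injective.hasSum_iff (add_right_injective R)]
    · refine (hasSum_iff_tendsto_nat_of_nonneg (f := f ∘ fun k => R + k) (fun k => hf0 _) _).2 ?_
      have h1 : ∀ m, ∑ k ∈ Finset.range m, (f ∘ fun k => R + k) k = a R - a (R + m) := by
        intro m
        have := Finset.sum_range_sub' (fun k => a (R + k)) m
        simpa [hf, add_assoc] using this
      simp_rw [h1]
      have h2 : Tendsto (fun m => a (R + m)) atTop (nhds 0) := by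
        simpa [add_comm] using (tendsto_add_atTop_iff_nat R).2 ha0
      simpa using h2.const_sub (a R)
    · intro r hr
      have : ¬ R ≤ r := fun hle => hr ⟨r - R, by simp; omega⟩
      simp [hf, this]
  rw [Measure.sum_apply _ measurableSet_Icc]
  have h3 : ∀ r, (ENNReal.ofReal (a r - a (r + 1)) • Measure.dirac (x r)) (Set.Icc (1 - t) 1)
      = ENNReal.ofReal (f r) := by
    intro r
    rw [Measure.smul_apply, Measure.dirac_apply' _ measurableSet_Icc]
    by_cases hr : R ≤ r
    · have : x r ∈ Set.Icc (1 - t) 1 := ⟨hR.trans (hx hr), hx1 r⟩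
      simp [hf, hr, this]
    · have : x r ∉ Set.Icc (1 - t) 1 := fun hm => (hR' r (not_le.1 hr)).not_ge hm.1
      simp [hf, hr, this]
  simp_rw [h3]
  rw [← ENNReal.ofReal_tsum_of_nonneg hf0 hsum.summable, hsum.tsum_eq, ENNReal.toReal_ofReal]
  exact hsum.nonneg hf0

/-- If `F` differs from `α log t` by a bounded amount near `0`, then `F t / log t → α`. -/
lemma tendsto_div_log {F : ℝ → ℝ} {α K : ℝ}
    (hF : ∀ᶠ t in nhdsWithin (0 : ℝ) (Set.Ioi 0), |F t - α * Real.log t| ≤ K) :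
    Tendsto (fun t => F t / Real.log t) (nhdsWithin 0 (Set.Ioi 0)) (nhds α) := by
  have hl : Tendsto (fun t => (Real.log t)⁻¹) (nhdsWithin (0 : ℝ) (Set.Ioi 0)) (nhds 0) :=
    Real.tendsto_log_nhdsGT_zero.inv_tendsto_atBot
  have hz : Tendsto (fun t => (Real.log t)⁻¹ * (F t - α * Real.log t))
      (nhdsWithin (0 : ℝ) (Set.Ioi 0)) (nhds 0) :=
    hl.zero_mul_isBoundedUnder_le ⟨K, by simpa using hF⟩
  have hz' := hz.add_const α
  rw [zero_add] at hz'
  refine hz'.congr' ?_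
  filter_upwards [Real.tendsto_log_nhdsGT_zero.eventually_lt_atBot 0] with t ht
  field_simp [ht.ne]
  ring

/-- for a homogeneous hierarchical structure of degree `nn ≥ 2` (`N r = nn ^ r`)
with `C₁ ρ⁻ʳ ≤ p r ≤ C₂ ρ⁻ʳ` eventually (`ρ > 1`), the density of states
`μ = ∑_{r≥0} (1/N r - 1/N (r+1)) δ(λ r)` satisfies
`lim_{t↓0} log μ([1-t,1]) / log t = log nn / log ρ`, i.e. the spectral dimension is
`2 log nn / log ρ`. -/
theorem stmt10 {X : Type*} [Countable X] [Infinite X]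
    (nn : ℕ) (hnn : 2 ≤ nn)
    (n : ℕ → ℕ) (Q : ℕ → X → Set X) (h : IsHierarchical n Q)
    (hhom : ∀ r, 1 ≤ r → n r = nn)
    (p : ℕ → ℝ) (hp0 : p 0 = 0) (hppos : ∀ r, 1 ≤ r → 0 < p r)
    (hpsum : HasSum (fun r => p (r + 1)) 1)
    (C₁ C₂ ρ : ℝ) (hC₁ : 0 < C₁) (hC₂ : 0 < C₂) (hρ : 1 < ρ) (r₀ : ℕ)
    (hbound : ∀ r : ℕ, r₀ ≤ r → C₁ / ρ ^ r ≤ p r ∧ p r ≤ C₂ / ρ ^ r) :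
    Tendsto
      (fun t : ℝ =>
        Real.log
            ((Measure.sum fun r : ℕ =>
                ENNReal.ofReal ((hN n r : ℝ)⁻¹ - (hN n (r + 1) : ℝ)⁻¹) •
                  Measure.dirac (lam p r))
              (Set.Icc (1 - t) 1)).toReal
          / Real.log t)
      (nhdsWithin 0 (Set.Ioi 0)) (nhds (Real.log nn / Real.log ρ)) := by
  have hρ0 : 0 < ρ := by linarith
  have hlρ : 0 < Real.log ρ := Real.log_pos hρ
  have hnn1 : (1 : ℝ) < nn := by exact_mod_cast hnn
  have hlam1 : ∀ r, lam p r < 1 := fun r => by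
    have := le_one_sub_lam hp0 hppos hpsum r
    have := hppos (r + 1) (by omega)
    linarith
  have hmono : Monotone (lam p) := monotone_nat_of_le_succ fun r => by
    have := hppos (r + 1) (by omega)
    unfold lam
    rw [Finset.sum_range_succ _ (r + 1)]
    linarith
  have hlim : Tendsto (lam p) atTop (nhds 1) := by
    have h1 := hpsum.tendsto_sum_nat
    refine h1.congr fun r => ?_
    simp [lam, Finset.sum_range_succ', hp0]
  have hNr : ∀ r, (hN n r : ℝ)⁻¹ = ((nn : ℝ)⁻¹) ^ r := fun r => by
    rw [hN_eq_pow h.n_zero hhom]; push_cast; rw [inv_pow]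
  have hinv0 : (0 : ℝ) ≤ (nn : ℝ)⁻¹ := by positivity
  have hinv1 : (nn : ℝ)⁻¹ < 1 := inv_lt_one_of_one_lt₀ hnn1
  set D : ℝ := C₂ * (1 - ρ⁻¹)⁻¹ with hD
  have hDpos : 0 < D := mul_pos hC₂ (inv_pos.2 (sub_pos.2 (inv_lt_one_of_one_lt₀ hρ)))
  refine tendsto_div_log (K := Real.log nn / Real.log ρ *
    max |Real.log C₁ - Real.log ρ| |Real.log D|) ?_
  filter_upwards [self_mem_nhdsWithin, nhdsWithin_le_nhds
    (Iio_mem_nhds (sub_pos.2 (hlam1 r₀)))] with t (ht0 : 0 < t) (ht1 : t < 1 - lam p r₀)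
  have hex : ∃ r, 1 - t ≤ lam p r :=
    (hlim.eventually (lt_mem_nhds (show 1 - t < 1 by linarith))).exists.imp fun _ hr => hr.le
  classical
  obtain ⟨R, hR, hR'⟩ : ∃ R, 1 - t ≤ lam p R ∧ ∀ r < R, lam p r < 1 - t :=
    ⟨Nat.find hex, Nat.find_spec hex, fun r hr => not_le.1 (Nat.find_min hex hr)⟩
  -- The strict inequality makes the bounds on `p` available from rank `R - 1` on.
  have hr₀R : r₀ < R := by
    by_contra! hle
    have := hmono hle
    linarith
  simp_rw [hNr]
  rw [toReal_sum_dirac_Icc hmono (fun r => (hlam1 r).le)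
    (fun i j hij => pow_le_pow_of_le_one hinv0 hinv1.le hij)
    (tendsto_pow_atTop_nhds_zero_of_lt_one hinv0 hinv1) hR hR']
  have hlo : C₁ / ρ ^ (R + 1) ≤ t := by
    have := le_one_sub_lam hp0 hppos hpsum R
    have := (hbound (R + 1) (by omega)).1
    linarith
  have hhi : t ≤ D / ρ ^ R := by
    obtain ⟨S, rfl⟩ : ∃ S, R = S + 1 := ⟨R - 1, by omega⟩
    have h1 := one_sub_lam_le hp0 hpsum hρ (r := S) (C := C₂)
      fun s hs => (hbound s (by omega)).2
    have := hR' S (by omega)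
    linarith
  have hlo' := Real.log_le_log (by positivity) hlo
  have hhi' := Real.log_le_log ht0 hhi
  rw [Real.log_div (by positivity) (by positivity), Real.log_pow] at hlo' hhi'
  push_cast at hlo'
  have hα : 0 ≤ Real.log nn / Real.log ρ := div_nonneg (Real.log_nonneg hnn1.le) hlρ.le
  have heq : Real.log (((nn : ℝ)⁻¹) ^ R) - Real.log nn / Real.log ρ * Real.log t
      = -(Real.log nn / Real.log ρ * (Real.log t + R * Real.log ρ)) := by
    rw [Real.log_pow, Real.log_inv]
    field_simp
    ring
  rw [heq, abs_neg, abs_mul, abs_of_nonneg hα]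
  refine mul_le_mul_of_nonneg_left (abs_le_max_abs_abs ?_ ?_) hα <;> linarith
end
end

section
/- Fix ω : X → ℝ and x ∈ X. For r ≥ 0 let A_r be the self-adjoint operator on the N_r-dimensional complex Hilbert space l²(Q_r(x)) defined by (A_r ψ)(t) := ω(t)ψ(t) + Σ_{s=1}^{r} p_s N_s^{−1} Σ_{t' ∈ Q_s(t)} ψ(t') for t ∈ Q_r(x) (this is the restriction of H_{ω,r} := V_ω + Σ_{s=0}^{r} p_s E_s to its invariant subspace l²(Q_r(x))). Suppose there exists a sequence of positive reals (u_r)_{r≥0} with Σ_{r=1}^{∞} u_r^{−1} < ∞ and Σ_{r=1}^{∞} p_r N_{r−1} u_{r−1} u_r < ∞. Then for Lebesgue-almost every e ∈ ℝ: e is not an eigenvalue of any A_r, and sup_{r ≥ 0} ‖(A_r − e)^{−1} δ_x‖² < ∞, where δ_x ∈ l²(Q_r(x)) is the Kronecker delta at x. -/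
/-!
The operator `A (r+1)` is the direct sum of the rank-`r` operators over the subclusters of
`Q (r+1) x`, plus `p (r+1)` times the rank-one projection onto constants. Write
`a r = (A r - e)⁻¹ δ_x` and `g r = (A r - e)⁻¹ 1`. The resolvent identity gives
`a (r+1) = a r - (p (r+1) / N (r+1)) ⟨1, a r⟩ g (r+1)` (with `a r` extended by zero), and
`⟨1, a r⟩` is the conjugate of `g r x` because `A r` is symmetric. Hence
`‖a (r+1)‖ ≤ ‖a r‖ + (p (r+1) / N (r+1)) ‖g r‖ ‖g (r+1)‖` (`resolvent_step`).

In an eigenbasis of `A r`, `‖g r‖²` is a sum of at most `N r` double poles in `e` of total weight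
at most `N r`, so `{e | ‖g r‖ > N r * u r}` has measure `O(1 / u r)` (`volume_resolvent_gt_le`).
By Borel-Cantelli, for almost every `e` one has `‖g r‖ ≤ N r * u r` for all large `r`; the
increments above are then eventually bounded by `p (r+1) * N r * u r * u (r+1)`, which is summable.
-/

open scoped ENNReal
open MeasureTheory Filter

noncomputable section

open scoped Classical

/-! ### Sums of double poles -/

/-- If `d = e - λ` has modulus more than `δ`, the resolvent kernel `(e - λ)⁻²` is dominated
by a multiple of the (globally integrable) Cauchy density of width `δ` centred at `λ`. -/
lemma inv_sq_le_cauchy {d δ : ℝ} (hδ : 0 < δ) (hd : δ < |d|) :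
    (d ^ 2)⁻¹ ≤ 2 * (δ ^ 2)⁻¹ * (1 + (d / δ) ^ 2)⁻¹ := by
  have h1 : δ ^ 2 < d ^ 2 := by
    rw [← sq_abs d]; gcongr
  have h2 : 0 < δ ^ 2 := by positivity
  have h3 : 0 < d ^ 2 := h2.trans h1
  have h4 : 2 * (δ ^ 2)⁻¹ * (1 + (d / δ) ^ 2)⁻¹ = 2 / (δ ^ 2 + d ^ 2) := by
    field_simp
  rw [h4, inv_eq_one_div, div_le_div_iff₀ h3 (by positivity)]
  linarith

lemma integrable_cauchy (δ : ℝ) (hδ : 0 < δ) (l : ℝ) :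
    Integrable (fun e : ℝ => (1 + ((e - l) / δ) ^ 2)⁻¹) :=
  (integrable_inv_one_add_sq.comp_div hδ.ne').comp_sub_right l

lemma integral_cauchy (δ : ℝ) (hδ : 0 < δ) (l : ℝ) :
    ∫ e : ℝ, (1 + ((e - l) / δ) ^ 2)⁻¹ = δ * Real.pi := by
  rw [integral_sub_right_eq_self (fun e : ℝ => (1 + (e / δ) ^ 2)⁻¹) l,
    Measure.integral_comp_div (fun e : ℝ => (1 + e ^ 2)⁻¹) δ, integral_univ_inv_one_add_sq,
    abs_of_pos hδ, smul_eq_mul]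

/-- Weak-type bound for a sum of `k ≤ N` double poles of total weight at most `N`: outside the
`1 / (N v)`-neighbourhood of the poles it exceeds `(N v)²` on a set of measure `O(1 / v)`, and
that neighbourhood has measure `O(1 / v)` as well. -/
lemma volume_poles_le {k : ℕ} (l m : Fin k → ℝ) (N v : ℝ) (hN : 0 < N) (hk : (k : ℝ) ≤ N)
    (hm0 : ∀ i, 0 ≤ m i) (hm : ∑ i, m i ≤ N) (hv : 0 < v) :
    volume {e : ℝ | (∀ i, (N * v)⁻¹ < |e - l i|) →
      (N * v) ^ 2 ≤ ∑ i, m i * ((e - l i) ^ 2)⁻¹} ≤ ENNReal.ofReal ((2 + 2 * Real.pi) * v⁻¹) := by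
  set δ : ℝ := (N * v)⁻¹ with hδdef
  have hδ : 0 < δ := by positivity
  set F : ℝ → ℝ := fun e => ∑ i, m i * (2 * (δ ^ 2)⁻¹ * (1 + ((e - l i) / δ) ^ 2)⁻¹) with hF
  have hFint : Integrable F := by
    apply integrable_finsetSum
    intro i _
    exact ((integrable_cauchy δ hδ (l i)).const_mul _).const_mul _
  have hFval : ∫ e, F e = (∑ i, m i) * (2 * (δ ^ 2)⁻¹ * (δ * Real.pi)) := by
    rw [hF, integral_finsetSum]
    · simp_rw [integral_const_mul, integral_cauchy δ hδ, Finset.sum_mul]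
    · intro i _
      exact ((integrable_cauchy δ hδ (l i)).const_mul _).const_mul _
  have hF0 : ∀ e, 0 ≤ F e := fun e => Finset.sum_nonneg fun i _ =>
    mul_nonneg (hm0 i) (by positivity)
  have hsub : {e : ℝ | (∀ i, δ < |e - l i|) → (N * v) ^ 2 ≤ ∑ i, m i * ((e - l i) ^ 2)⁻¹} ⊆
      (⋃ i, Metric.closedBall (l i) δ) ∪ {e | (N * v) ^ 2 ≤ F e} := by
    intro e he
    by_cases hc : ∀ i, δ < |e - l i|
    · right
      refine (he hc).trans (Finset.sum_le_sum fun i _ => ?_)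
      exact mul_le_mul_of_nonneg_left (inv_sq_le_cauchy hδ (hc i)) (hm0 i)
    · left
      push Not at hc
      obtain ⟨i, hi⟩ := hc
      exact Set.mem_iUnion.2 ⟨i, by rwa [Metric.mem_closedBall, Real.dist_eq]⟩
  have hS : volume (⋃ i, Metric.closedBall (l i) δ) ≤ ENNReal.ofReal (2 * v⁻¹) := by
    refine (measure_iUnion_le _).trans ?_
    simp only [Real.volume_closedBall, tsum_fintype, Finset.sum_const, Finset.card_univ,
      Fintype.card_fin, nsmul_eq_mul]
    rw [← ENNReal.ofReal_natCast, ← ENNReal.ofReal_mul (by positivity)]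
    apply ENNReal.ofReal_le_ofReal
    calc (k : ℝ) * (2 * δ) ≤ N * (2 * δ) := by gcongr
      _ = 2 * v⁻¹ := by rw [hδdef]; field_simp
  have hM : volume {e | (N * v) ^ 2 ≤ F e} ≤ ENNReal.ofReal (2 * Real.pi * v⁻¹) := by
    have hfin := hFint.measure_ge_lt_top (ε := (N * v) ^ 2) (by positivity)
    have h1 := mul_meas_ge_le_integral_of_nonneg (Filter.Eventually.of_forall hF0) hFint
      ((N * v) ^ 2)
    rw [← ENNReal.ofReal_toReal hfin.ne]
    apply ENNReal.ofReal_le_ofReal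
    rw [hFval] at h1
    have h2 : (∑ i, m i) * (2 * (δ ^ 2)⁻¹ * (δ * Real.pi)) ≤
        (N * v) ^ 2 * (2 * Real.pi * v⁻¹) := by
      calc (∑ i, m i) * (2 * (δ ^ 2)⁻¹ * (δ * Real.pi))
          ≤ N * (2 * (δ ^ 2)⁻¹ * (δ * Real.pi)) := by
            have := Real.pi_pos
            gcongr
        _ = (N * v) ^ 2 * (2 * Real.pi * v⁻¹) := by rw [hδdef]; field_simp
    exact le_of_mul_le_mul_left (h1.trans h2) (by positivity)
  refine (measure_mono hsub).trans ((measure_union_le _ _).trans ((add_le_add hS hM).trans ?_))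
  have := Real.pi_pos
  rw [← ENNReal.ofReal_add (by positivity) (by positivity)]
  apply ENNReal.ofReal_le_ofReal
  linarith

/-! ### Resolvents of symmetric operators in finite dimension -/

section Spectral

variable {E : Type*} [NormedAddCommGroup E] [InnerProductSpace ℂ E] [FiniteDimensional ℂ E]

lemma eigen_coord {T : E →ₗ[ℂ] E} (hT : T.IsSymmetric) (e : ℝ) (φ : E)
    (i : Fin (Module.finrank ℂ E)) :
    inner ℂ (hT.eigenvectorBasis rfl i) (T φ - (e : ℂ) • φ) =
      ((hT.eigenvalues rfl i - e : ℝ) : ℂ) * inner ℂ (hT.eigenvectorBasis rfl i) φ := by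
  rw [inner_sub_right, ← hT, hT.apply_eigenvectorBasis, inner_smul_left, inner_smul_right]
  simp [sub_mul]

lemma ae_not_eigenvalue {T : E →ₗ[ℂ] E} (hT : T.IsSymmetric) :
    ∀ᵐ e : ℝ, ∀ ψ : E, T ψ = (e : ℂ) • ψ → ψ = 0 := by
  have h0 : volume (Set.range (hT.eigenvalues rfl)) = 0 :=
    (Set.finite_range _).measure_zero _
  filter_upwards [compl_mem_ae_iff.2 h0] with e he ψ hψ
  rw [← norm_eq_zero, ← sq_eq_zero_iff, ← (hT.eigenvectorBasis rfl).sum_sq_norm_inner_right ψ]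
  refine Finset.sum_eq_zero fun i _ => ?_
  have h1 := eigen_coord hT e ψ i
  rw [hψ, sub_self, inner_zero_right] at h1
  have h2 : (hT.eigenvalues rfl i - e : ℝ) ≠ 0 := fun hh => he ⟨i, sub_eq_zero.1 hh⟩
  have h3 := (mul_eq_zero.1 h1.symm).resolve_left (by exact_mod_cast h2)
  rw [h3, norm_zero, sq, zero_mul]

/-- Weak-type estimate for `e ↦ ‖(T - e)⁻¹ f‖` with `T` self-adjoint: in an eigenbasis its square
is a sum of `dim E` double poles with total weight `‖f‖²`. -/
lemma volume_resolvent_gt_le {T : E →ₗ[ℂ] E} (hT : T.IsSymmetric) (f : E) (N v : ℝ)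
    (hN : 0 < N) (hdim : (Module.finrank ℂ E : ℝ) ≤ N) (hf : ‖f‖ ^ 2 ≤ N) (hv : 0 < v) :
    volume {e : ℝ | ∃ φ : E, T φ - (e : ℂ) • φ = f ∧ N * v < ‖φ‖} ≤
      ENNReal.ofReal ((2 + 2 * Real.pi) * v⁻¹) := by
  refine (measure_mono ?_).trans (volume_poles_le (hT.eigenvalues rfl)
    (fun i => ‖inner ℂ (hT.eigenvectorBasis rfl i) f‖ ^ 2) N v hN hdim
    (fun i => by positivity) ?_ hv)
  · rintro e ⟨φ, hφ, hlt⟩ hd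
    have h1 : ‖φ‖ ^ 2 = ∑ i, ‖inner ℂ (hT.eigenvectorBasis rfl i) f‖ ^ 2 *
        ((e - hT.eigenvalues rfl i) ^ 2)⁻¹ := by
      rw [← (hT.eigenvectorBasis rfl).sum_sq_norm_inner_right φ]
      refine Finset.sum_congr rfl fun i _ => ?_
      have h2 := eigen_coord hT e φ i
      have h3 : (e - hT.eigenvalues rfl i) ≠ 0 := by
        rw [← abs_pos]; exact lt_trans (by positivity) (hd i)
      rw [hφ] at h2
      rw [h2, norm_mul, mul_pow, Complex.norm_real, Real.norm_eq_abs, sq_abs,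
        ← neg_sub e, neg_sq]
      field_simp
    rw [← h1]
    gcongr
  · rw [(hT.eigenvectorBasis rfl).sum_sq_norm_inner_right f]
    exact hf

end Spectral

/-- The resolvent equation `(T - e) φ = f` is solvable when `e` is not an eigenvalue. -/
lemma exists_resolvent {E : Type*} [NormedAddCommGroup E] [InnerProductSpace ℂ E]
    [FiniteDimensional ℂ E] (T : E →ₗ[ℂ] E) (e : ℝ)
    (he : ∀ ψ : E, T ψ = (e : ℂ) • ψ → ψ = 0) (f : E) : ∃ φ : E, T φ - (e : ℂ) • φ = f := by
  have hinj : Function.Injective (T - (e : ℂ) • (LinearMap.id : E →ₗ[ℂ] E)) := by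
    rw [injective_iff_map_eq_zero]
    intro ψ hψ
    exact he ψ (sub_eq_zero.1 (by simpa using hψ))
  obtain ⟨φ, hφ⟩ := LinearMap.injective_iff_surjective.1 hinj f
  exact ⟨φ, by simpa using hφ⟩

/-! ### Clusters and functions supported on them -/

namespace IsHierarchical

variable {X : Type*} {n : ℕ → ℕ} {Q : ℕ → X → Set X}

lemma mem_comm (h : IsHierarchical n Q) {r : ℕ} {y z : X} : y ∈ Q r z ↔ z ∈ Q r y :=
  ⟨fun hy => h.eq_of_mem r z y hy ▸ h.mem_self r z,
    fun hz => h.eq_of_mem r y z hz ▸ h.mem_self r y⟩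

lemma mono (h : IsHierarchical n Q) {r s : ℕ} (hrs : r ≤ s) (y : X) : Q r y ⊆ Q s y := by
  induction s, hrs using Nat.le_induction with
  | base => exact subset_rfl
  | succ s _ ih => exact ih.trans (h.subset_succ s y)

lemma hN_pos (h : IsHierarchical n Q) (r : ℕ) : 0 < hN n r :=
  Finset.prod_pos fun s _ => h.n_pos s

/-- Only the upper bound on the cluster sizes is needed for the measure estimates. -/
lemma ncard_le (h : IsHierarchical n Q) (r : ℕ) : ∀ y, (Q r y).ncard ≤ hN n r := by
  induction r with
  | zero => intro y; simp [h.Q_zero, hN, h.n_zero]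
  | succ r ih =>
    intro y
    set S := (h.finite (r + 1) y).toFinset
    have h1 : S.card ≤ hN n r * (S.image (Q r)).card := by
      refine Finset.card_le_mul_card_image S _ fun b hb => ?_
      obtain ⟨z, _, rfl⟩ := Finset.mem_image.1 hb
      refine le_trans ?_ (ih z)
      rw [Set.ncard_eq_toFinset_card _ (h.finite r z)]
      refine Finset.card_le_card fun a ha => ?_
      rw [Set.Finite.mem_toFinset, ← (Finset.mem_filter.1 ha).2]
      exact h.mem_self r a
    have h2 : (S.image (Q r)).card = n (r + 1) := by
      rw [← h.card_sub r y, Nat.card_coe_set_eq, ← Set.ncard_coe_finset]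
      congr 1
      ext b
      simp [S]
    rw [Set.ncard_eq_toFinset_card _ (h.finite (r + 1) y)]
    rw [h2] at h1
    rwa [hN, Finset.prod_range_succ]

lemma card_le (h : IsHierarchical n Q) (r : ℕ) (y : X) [Fintype ↥(Q r y)] :
    Fintype.card ↥(Q r y) ≤ hN n r := by
  have := h.ncard_le r y
  rwa [← Nat.card_coe_set_eq, Nat.card_eq_fintype_card] at this

end IsHierarchical

/-- The constant function `1` in `l²(S)`. -/
def onesVec (S : Type*) [Fintype S] : EuclideanSpace ℂ S := WithLp.toLp 2 fun _ => 1

lemma onesVec_apply {S : Type*} [Fintype S] (t : S) : onesVec S t = 1 := rfl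

lemma norm_onesVec_sq (S : Type*) [Fintype S] : ‖onesVec S‖ ^ 2 = Fintype.card S := by
  rw [EuclideanSpace.norm_sq_eq]
  simp [onesVec_apply]

lemma inner_onesVec {S : Type*} [Fintype S] (φ : EuclideanSpace ℂ S) :
    inner ℂ (onesVec S) φ = ∑ t, φ t := by
  rw [PiLp.inner_apply]
  simp [onesVec_apply]

/-- Extension by zero of a function on `S` to a second set, meant for sets containing `S`. -/
def extZero {X : Type*} {S S' : Set X} [Fintype S] [Fintype S'] (φ : EuclideanSpace ℂ S) :
    EuclideanSpace ℂ S' :=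
  WithLp.toLp 2 fun t => if ht : (t : X) ∈ S then φ ⟨t, ht⟩ else 0

lemma extZero_apply {X : Type*} {S S' : Set X} [Fintype S] [Fintype S']
    (φ : EuclideanSpace ℂ S) (t : S') :
    (extZero φ : EuclideanSpace ℂ S') t = if ht : (t : X) ∈ S then φ ⟨t, ht⟩ else 0 := rfl

lemma sum_ext {X M : Type*} [AddCommMonoid M] {S S' : Set X} [Fintype S] [Fintype S']
    (hS : S ⊆ S') (F : S → M) :
    ∑ t : S', (if ht : (t : X) ∈ S then F ⟨t, ht⟩ else 0) = ∑ t : S, F t := by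
  symm
  apply Fintype.sum_of_injective (Set.inclusion hS) (Set.inclusion_injective hS)
  · intro t ht
    rw [dif_neg]
    exact fun hh => ht ⟨⟨t, hh⟩, rfl⟩
  · intro t
    simp

lemma norm_extZero {X : Type*} {S S' : Set X} [Fintype S] [Fintype S'] (hS : S ⊆ S')
    (φ : EuclideanSpace ℂ S) : ‖(extZero φ : EuclideanSpace ℂ S')‖ = ‖φ‖ := by
  rw [← sq_eq_sq₀ (norm_nonneg _) (norm_nonneg _), EuclideanSpace.norm_sq_eq,
    EuclideanSpace.norm_sq_eq, ← sum_ext hS fun t => ‖φ t‖ ^ 2]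
  refine Finset.sum_congr rfl fun t _ => ?_
  rw [extZero_apply]
  split_ifs <;> simp

/-! ### The hierarchical operators -/

section Operator

variable {X : Type*} {n : ℕ → ℕ} {Q : ℕ → X → Set X} {p : ℕ → ℝ} {ω : X → ℝ} {x : X}
  [∀ r, Fintype ↥(Q r x)] {A : ∀ r, EuclideanSpace ℂ ↥(Q r x) →ₗ[ℂ] EuclideanSpace ℂ ↥(Q r x)}

lemma isSymmetric_A (h : IsHierarchical n Q)
    (hA : ∀ (r : ℕ) (ψ : EuclideanSpace ℂ ↥(Q r x)) (t : ↥(Q r x)),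
      A r ψ t = (ω (t : X) : ℂ) * ψ t
        + ∑ s ∈ Finset.Icc 1 r, (p s : ℂ) * (hN n s : ℂ)⁻¹ *
            ∑ t' : ↥(Q r x), if (t' : X) ∈ Q s (t : X) then ψ t' else 0) (r : ℕ) :
    (A r).IsSymmetric := by
  intro φ ψ
  rw [PiLp.inner_apply, PiLp.inner_apply]
  simp only [RCLike.inner_apply, hA, map_add, map_mul, map_sum, map_inv₀, Complex.conj_ofReal,
    Complex.conj_natCast, mul_add, add_mul, Finset.sum_add_distrib, Finset.mul_sum,
    Finset.sum_mul, apply_ite (starRingEnd ℂ), map_zero]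
  congr 1
  · exact Finset.sum_congr rfl fun t _ => by ring
  · rw [Finset.sum_comm]
    conv_rhs => rw [Finset.sum_comm]
    refine Finset.sum_congr rfl fun s _ => ?_
    rw [Finset.sum_comm]
    refine Finset.sum_congr rfl fun t _ => Finset.sum_congr rfl fun t' _ => ?_
    by_cases ht : (t : X) ∈ Q s (t' : X)
    · rw [if_pos ht, if_pos (h.mem_comm.1 ht)]; ring
    · rw [if_neg ht, if_neg (fun hh => ht (h.mem_comm.1 hh))]; ring

/-- On functions supported in the smaller cluster, `A (r+1)` differs from `A r` by the rank-one
operator `p (r+1) E (r+1)`: the averages of rank at most `r` do not leave the cluster `Q r x`. -/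
lemma A_succ_extZero (h : IsHierarchical n Q)
    (hA : ∀ (r : ℕ) (ψ : EuclideanSpace ℂ ↥(Q r x)) (t : ↥(Q r x)),
      A r ψ t = (ω (t : X) : ℂ) * ψ t
        + ∑ s ∈ Finset.Icc 1 r, (p s : ℂ) * (hN n s : ℂ)⁻¹ *
            ∑ t' : ↥(Q r x), if (t' : X) ∈ Q s (t : X) then ψ t' else 0)
    (r : ℕ) (φ : EuclideanSpace ℂ ↥(Q r x)) :
    A (r + 1) (extZero φ) = extZero (A r φ) +
      ((p (r + 1) : ℂ) * (hN n (r + 1) : ℂ)⁻¹ * ∑ t, φ t) • onesVec ↥(Q (r + 1) x) := by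
  ext t
  have hsum : ∀ s, (∑ t' : ↥(Q (r + 1) x), if (t' : X) ∈ Q s (t : X)
      then (extZero φ : EuclideanSpace ℂ ↥(Q (r + 1) x)) t' else 0) =
      ∑ t' : ↥(Q r x), if (t' : X) ∈ Q s (t : X) then φ t' else 0 := by
    intro s
    rw [← sum_ext (h.subset_succ r x)]
    refine Finset.sum_congr rfl fun t' _ => ?_
    rw [extZero_apply]
    split_ifs <;> rfl
  have htop : (∑ t' : ↥(Q r x), if (t' : X) ∈ Q (r + 1) (t : X) then φ t' else 0) =
      ∑ t', φ t' := by
    refine Finset.sum_congr rfl fun t' _ => if_pos ?_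
    rw [← h.eq_of_mem _ _ _ t.2]
    exact h.subset_succ r x t'.2
  rw [hA, Finset.sum_Icc_succ_top (by omega)]
  simp only [hsum, htop, PiLp.add_apply, PiLp.smul_apply, onesVec_apply, smul_eq_mul, mul_one]
  rw [← add_assoc]
  congr 1
  rw [extZero_apply, extZero_apply]
  split_ifs with ht
  · rw [hA]
  · rw [mul_zero, zero_add]
    refine Finset.sum_eq_zero fun s hs => ?_
    rw [Finset.sum_eq_zero, mul_zero]
    intro t' _
    rw [if_neg]
    intro hh
    apply ht
    have h1 : (t' : X) ∈ Q r (t : X) := h.mono (Finset.mem_Icc.1 hs).2 _ hh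
    rw [h.eq_of_mem r x t' t'.2]
    exact h.mem_comm.1 h1

/-- Recursion for the resolvent vectors `a r = (A r - e)⁻¹ δ_x` in terms of
`g r = (A r - e)⁻¹ 1`. By the resolvent identity `a (r+1) - a r` is
`-(p (r+1) / N (r+1)) ⟨1, a r⟩ g (r+1)`, and `⟨1, a r⟩` is the conjugate of `g r x`. -/
lemma resolvent_step [DecidableEq X] (h : IsHierarchical n Q) (hppos : ∀ r, 1 ≤ r → 0 < p r)
    (hA : ∀ (r : ℕ) (ψ : EuclideanSpace ℂ ↥(Q r x)) (t : ↥(Q r x)),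
      A r ψ t = (ω (t : X) : ℂ) * ψ t
        + ∑ s ∈ Finset.Icc 1 r, (p s : ℂ) * (hN n s : ℂ)⁻¹ *
            ∑ t' : ↥(Q r x), if (t' : X) ∈ Q s (t : X) then ψ t' else 0)
    {e : ℝ} (he : ∀ (r : ℕ) (ψ : EuclideanSpace ℂ ↥(Q r x)), A r ψ = (e : ℂ) • ψ → ψ = 0)
    {g a : ∀ r, EuclideanSpace ℂ ↥(Q r x)}
    (hg : ∀ r, A r (g r) - (e : ℂ) • g r = onesVec ↥(Q r x))
    (ha : ∀ r, A r (a r) - (e : ℂ) • a r = EuclideanSpace.single ⟨x, h.mem_self r x⟩ 1)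
    (r : ℕ) :
    ‖a (r + 1)‖ ≤ ‖a r‖ + p (r + 1) * (hN n (r + 1) : ℝ)⁻¹ * ‖g r‖ * ‖g (r + 1)‖ := by
  have hpair : (∑ t, a r t) = inner ℂ (g r) (EuclideanSpace.single ⟨x, h.mem_self r x⟩ 1) := by
    rw [← inner_onesVec, ← hg r, ← ha r, inner_sub_left, inner_sub_right, inner_smul_left,
      inner_smul_right, isSymmetric_A h hA r, Complex.conj_ofReal]
  have hpair' : ‖∑ t, a r t‖ ≤ ‖g r‖ := by
    rw [hpair]
    refine (norm_inner_le_norm _ _).trans ?_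
    simp
  set c : ℂ := (p (r + 1) : ℂ) * (hN n (r + 1) : ℂ)⁻¹ * ∑ t, a r t with hc
  have hext : extZero (A r (a r)) - (e : ℂ) • (extZero (a r) : EuclideanSpace ℂ ↥(Q (r + 1) x)) =
      EuclideanSpace.single ⟨x, h.mem_self (r + 1) x⟩ 1 := by
    ext t
    have h0 := fun t' : ↥(Q r x) => congrArg (fun ψ : EuclideanSpace ℂ ↥(Q r x) => ψ t') (ha r)
    simp only [PiLp.sub_apply, PiLp.smul_apply, extZero_apply, smul_eq_mul,
      PiLp.single_apply, Subtype.ext_iff] at h0 ⊢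
    split_ifs with ht hx hx
    · rw [h0 ⟨t, ht⟩, if_pos hx]
    · rw [h0 ⟨t, ht⟩, if_neg hx]
    · exact absurd (by rw [hx]; exact h.mem_self r x) ht
    · simp
  -- By injectivity of `A (r+1) - e` it suffices to compare the images of both sides.
  have hkey : a (r + 1) = extZero (a r) - c • g (r + 1) := by
    rw [← sub_eq_zero]
    apply he (r + 1)
    rw [← sub_eq_zero]
    have h1 := A_succ_extZero h hA r (a r)
    rw [← hc, ← hg (r + 1)] at h1
    have h2 := ha (r + 1)
    rw [← hext] at h2
    simp only [map_sub, map_smul, h1]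
    rw [sub_eq_iff_eq_add] at h2
    rw [h2]
    module
  rw [hkey]
  refine (norm_sub_le _ _).trans ?_
  rw [norm_extZero (h.subset_succ r x), norm_smul]
  have hp := hppos (r + 1) (by omega)
  have hcn : ‖c‖ ≤ p (r + 1) * (hN n (r + 1) : ℝ)⁻¹ * ‖g r‖ := by
    rw [hc, norm_mul, norm_mul, norm_inv, Complex.norm_real, Complex.norm_natCast,
      Real.norm_of_nonneg hp.le]
    gcongr
  gcongr

end Operator

/-- let `A r` be the restriction of `H_{ω,r} = V_ω + ∑_{s=0}^r p s E s` to the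
invariant `N r`-dimensional subspace `ℓ²(Q r x)`. If `∑_{r≥1} (u r)⁻¹ < ∞` and
`∑_{r≥1} p r * N (r-1) * u (r-1) * u r < ∞` for some positive sequence `u`, then for
Lebesgue-a.e. `e ∈ ℝ`: `e` is not an eigenvalue of any `A r`, and
`sup_r ‖(A r - e)⁻¹ δ_x‖² < ∞`. -/
theorem stmt17 {X : Type*} [Countable X] [Infinite X] [DecidableEq X]
    (n : ℕ → ℕ) (Q : ℕ → X → Set X) (h : IsHierarchical n Q)
    (p : ℕ → ℝ) (hp0 : p 0 = 0) (hppos : ∀ r, 1 ≤ r → 0 < p r)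
    (hpsum : HasSum (fun r => p (r + 1)) 1)
    (ω : X → ℝ) (x : X) [∀ r, Fintype ↥(Q r x)]
    (A : ∀ r, EuclideanSpace ℂ ↥(Q r x) →ₗ[ℂ] EuclideanSpace ℂ ↥(Q r x))
    (hA : ∀ (r : ℕ) (ψ : EuclideanSpace ℂ ↥(Q r x)) (t : ↥(Q r x)),
      A r ψ t = (ω (t : X) : ℂ) * ψ t
        + ∑ s ∈ Finset.Icc 1 r, (p s : ℂ) * (hN n s : ℂ)⁻¹ *
            ∑ t' : ↥(Q r x), if (t' : X) ∈ Q s (t : X) then ψ t' else 0)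
    (u : ℕ → ℝ) (hu : ∀ r, 0 < u r)
    (hu1 : Summable fun r : ℕ => (u (r + 1))⁻¹)
    (hu2 : Summable fun r : ℕ => p (r + 1) * (hN n r : ℝ) * u r * u (r + 1)) :
    ∀ᵐ e : ℝ ∂volume,
      (∀ (r : ℕ) (ψ : EuclideanSpace ℂ ↥(Q r x)), A r ψ = (e : ℂ) • ψ → ψ = 0) ∧
      ∃ C : ℝ, ∀ (r : ℕ) (φ : EuclideanSpace ℂ ↥(Q r x)),
        A r φ - (e : ℂ) • φ = EuclideanSpace.single ⟨x, h.mem_self r x⟩ 1 →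
        ‖φ‖ ^ 2 ≤ C := by
  have hsym : ∀ r, (A r).IsSymmetric := isSymmetric_A h hA
  have hNpos : ∀ r, (0 : ℝ) < hN n r := fun r => by exact_mod_cast h.hN_pos r
  have hbad : ∀ r, volume {e : ℝ | ∃ φ : EuclideanSpace ℂ ↥(Q (r + 1) x),
      A (r + 1) φ - (e : ℂ) • φ = onesVec ↥(Q (r + 1) x) ∧
        (hN n (r + 1) : ℝ) * u (r + 1) < ‖φ‖} ≤
      ENNReal.ofReal ((2 + 2 * Real.pi) * (u (r + 1))⁻¹) := by
    intro r
    have hcard : (Fintype.card ↥(Q (r + 1) x) : ℝ) ≤ hN n (r + 1) := by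
      exact_mod_cast h.card_le (r + 1) x
    refine volume_resolvent_gt_le (hsym (r + 1)) _ _ _ (hNpos _) ?_ ?_ (hu _)
    · rwa [finrank_euclideanSpace]
    · rwa [norm_onesVec_sq]
  have hsumm : ∑' r : ℕ, volume {e : ℝ | ∃ φ : EuclideanSpace ℂ ↥(Q (r + 1) x),
      A (r + 1) φ - (e : ℂ) • φ = onesVec ↥(Q (r + 1) x) ∧
        (hN n (r + 1) : ℝ) * u (r + 1) < ‖φ‖} ≠ ⊤ :=
    ne_top_of_le_ne_top (hu1.mul_left (2 + 2 * Real.pi)).tsum_ofReal_ne_top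
      (ENNReal.tsum_le_tsum hbad)
  filter_upwards [ae_eventually_notMem hsumm, ae_all_iff.2 fun r => ae_not_eigenvalue (hsym r)]
    with e hev hne
  refine ⟨hne, ?_⟩
  choose g hg using fun r => exists_resolvent (A r) e (hne r) (onesVec ↥(Q r x))
  choose a ha using fun r => exists_resolvent (A r) e (hne r)
    (EuclideanSpace.single ⟨x, h.mem_self r x⟩ 1)
  have hgev : ∀ᶠ r in atTop, ‖g r‖ ≤ hN n r * u r := by
    rw [← map_add_atTop_eq_nat 1, eventually_map]
    filter_upwards [hev] with r hr
    by_contra hlt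
    exact hr ⟨g (r + 1), hg (r + 1), not_le.1 hlt⟩
  set c : ℕ → ℝ := fun r => p (r + 1) * (hN n (r + 1) : ℝ)⁻¹ * ‖g r‖ * ‖g (r + 1)‖ with hc
  have hc0 : ∀ r, 0 ≤ c r := fun r => by
    have := hppos (r + 1) (by omega)
    positivity
  have hcs : Summable c := by
    refine Summable.of_norm_bounded_eventually_nat hu2 ?_
    filter_upwards [hgev, (tendsto_add_atTop_nat 1).eventually hgev] with r h1 h2
    have hp := hppos (r + 1) (by omega)
    have h3 := hNpos (r + 1)
    rw [Real.norm_of_nonneg (hc0 r)]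
    calc c r ≤ p (r + 1) * (hN n (r + 1) : ℝ)⁻¹ * (hN n r * u r) *
          (hN n (r + 1) * u (r + 1)) := by
          have := mul_pos (hNpos r) (hu r)
          simp only [hc]
          gcongr
      _ = p (r + 1) * (hN n r : ℝ) * u r * u (r + 1) := by field_simp
  have hbd : ∀ r, ‖a r‖ ≤ ‖a 0‖ + ∑ s ∈ Finset.range r, c s := by
    intro r
    induction r with
    | zero => simp
    | succ r ih =>
      rw [Finset.sum_range_succ]
      have := resolvent_step h hppos hA hne hg ha r
      simp only [hc] at ih ⊢
      linarith
  refine ⟨(‖a 0‖ + ∑' s, c s) ^ 2, fun r φ hφ => ?_⟩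
  have hφa : φ = a r := by
    rw [← sub_eq_zero]
    apply hne r
    rw [← sub_eq_zero, map_sub]
    calc A r φ - A r (a r) - (e : ℂ) • (φ - a r)
        = (A r φ - (e : ℂ) • φ) - (A r (a r) - (e : ℂ) • a r) := by module
      _ = 0 := by rw [hφ, ha r, sub_self]
  rw [hφa]
  have h1 := hcs.sum_le_tsum (Finset.range r) fun s _ => hc0 s
  have h2 := hbd r
  exact pow_le_pow_left₀ (norm_nonneg _) (h2.trans (by linarith)) 2
end
end
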